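/- Let H be a reflexive digraph. If there exists a tournament on V(H) consistent with H, then there exists an acyclic tournament on V(H) (one with no directed cycles, equivalently no directed triangles) consistent with H. -/

import Mathlib

/-- A digraph on vertex type `V` is given by its edge relation `E : V → V → Prop`
(loops allowed).  The min-ordering property for a strict linear order `r`:
for any edges `(u,v)` and `(u',v')` with `r u u'` and `r v' v`, `(u,v')` is also an edge. -/
def MinOrderProp {V : Type*} (E r : V → V → Prop) : Prop :=
  ∀ u v u' v' : V, E u v → E u' v' → r u u' → r v' v → E u v'

/-- The edge relation of the pair digraph `H⁺` of a digraph with edge relation `E`: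
for all vertices `u, u', v, v'`, there are edges `(u,u') → (v,v')` and `(v',v) → (u',u)`
whenever `E u v`, `E u' v'`, `¬ E u v'`, and the endpoints have distinct coordinates. -/
def pairEdge {V : Type*} (E : V → V → Prop) (p q : V × V) : Prop :=
  ∃ u u' v v' : V, u ≠ u' ∧ v ≠ v' ∧ E u v ∧ E u' v' ∧ ¬ E u v' ∧
    ((p = (u, u') ∧ q = (v, v')) ∨ (p = (v', v) ∧ q = (u', u)))

/-- The edge relation of the implication graph `H*` of a reflexive digraph with edge
relation `E`: for any three distinct vertices `u, v, w`, there are edges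
`(u,v) → (w,v)` and `(v,w) → (v,u)` iff `[E u w ∧ ¬ E u v]` or `[E w u ∧ ¬ E v u]`. -/
def implEdge {V : Type*} (E : V → V → Prop) (p q : V × V) : Prop :=
  ∃ u v w : V, u ≠ v ∧ v ≠ w ∧ u ≠ w ∧
    ((E u w ∧ ¬ E u v) ∨ (E w u ∧ ¬ E v u)) ∧
    ((p = (u, v) ∧ q = (w, v)) ∨ (p = (v, w) ∧ q = (v, u)))

/-- A tournament on `V`: for each pair of distinct vertices exactly one of the two
directed edges is present, and there are no loops. -/
def IsTournamentRel {V : Type*} (T : V → V → Prop) : Prop :=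
  (∀ u, ¬ T u u) ∧ ∀ u v : V, u ≠ v → (T u v ↔ ¬ T v u)

/-- A tournament (orientation of the complete graph) `T` is consistent with the digraph `E`
if for every vertex `(u,v)` of the implication graph and every vertex `(u',v')` reachable
from `(u,v)` by a directed walk in the implication graph, `u → v` in `T` implies
`u' → v'` in `T`. -/
def ConsistentWith {V : Type*} (E T : V → V → Prop) : Prop :=
  ∀ u v u' v' : V, u ≠ v → u' ≠ v' →
    Relation.ReflTransGen (implEdge E) (u, v) (u', v') → T u v → T u' v'

/-- `u, v` form an invertible pair of the digraph `E`: they are distinct and `(u,v)` and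
`(v,u)` lie in the same strong component of the pair digraph. -/
def InvertiblePair {V : Type*} (E : V → V → Prop) (u v : V) : Prop :=
  u ≠ v ∧ Relation.ReflTransGen (pairEdge E) (u, v) (v, u) ∧
    Relation.ReflTransGen (pairEdge E) (v, u) (u, v)

/-- The tournament obtained from `T` by reversing the direction of all edges `(x, y)` of `T`
with `u → x`, `x → y`, `y → u` in `T` (the set `E_u`). -/
def revTri {V : Type*} (T : V → V → Prop) (u : V) (x y : V) : Prop :=
  (T x y ∧ ¬ (T u x ∧ T x y ∧ T y u)) ∨ (T y x ∧ T u y ∧ T x u)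

def Cons1 {V : Type*} (E T : V → V → Prop) : Prop :=
  ∀ a b c : V, a ≠ b → b ≠ c → a ≠ c → ((E a c ∧ ¬ E a b) ∨ (E c a ∧ ¬ E b a)) →
    T a b → T c b

theorem cons1_of {V : Type*} {E T : V → V → Prop} (h : ConsistentWith E T) : Cons1 E T := by
  intro a b c h1 h2 h3 hc
  exact h a b c b h1 h2.symm
    (Relation.ReflTransGen.single ⟨a, b, c, h1, h2, h3, hc, Or.inl ⟨rfl, rfl⟩⟩)

theorem of_cons1 {V : Type*} {E T : V → V → Prop} (hT : IsTournamentRel T) (h : Cons1 E T) :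
    ConsistentWith E T := by
  have key : ∀ p q : V × V, Relation.ReflTransGen (implEdge E) p q → T p.1 p.2 → T q.1 q.2 := by
    intro p q hpq hp
    induction hpq with
    | refl => exact hp
    | tail _ hs ih =>
      obtain ⟨a, b, c, h1, h2, h3, hc, hh | hh⟩ := hs
      · obtain ⟨rfl, rfl⟩ := hh
        exact h a b c h1 h2 h3 hc ih
      · obtain ⟨rfl, rfl⟩ := hh
        have := h a b c h1 h2 h3 hc
        have i1 := hT.2 b c h2
        have i2 := hT.2 b a h1.symm
        simp only at ih ⊢
        tauto
  intro u v u' v' _ _ hr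
  exact key _ _ hr

theorem revTri_tour {V : Type*} {T : V → V → Prop} (hT : IsTournamentRel T) (u : V) :
    IsTournamentRel (revTri T u) := by
  obtain ⟨h0, h1⟩ := hT
  refine ⟨fun x => ?_, fun x y hxy => ?_⟩
  · have := h0 x
    unfold revTri; tauto
  · have := h1 x y hxy
    have a1 : T u x → ¬ T x u := fun h => (h1 u x (by rintro rfl; exact h0 _ h)).1 h
    have a2 : T u y → ¬ T y u := fun h => (h1 u y (by rintro rfl; exact h0 _ h)).1 h
    unfold revTri; tauto

def InTri {V : Type*} (T : V → V → Prop) (u : V) : Prop := ∃ x y, T u x ∧ T x y ∧ T y u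

theorem revTri_not {V : Type*} {T : V → V → Prop} (hT : IsTournamentRel T) (u : V) :
    ¬ InTri (revTri T u) u := by
  obtain ⟨h0, h1⟩ := hT
  have as : ∀ x y, T x y → ¬ T y x := fun x y h => (h1 x y (by rintro rfl; exact h0 _ h)).1 h
  rintro ⟨x, y, h⟩
  unfold revTri at h
  grind

theorem revTri_pres {V : Type*} {T : V → V → Prop} (hT : IsTournamentRel T) (u v : V)
    (hv : ¬ InTri T v) : ¬ InTri (revTri T u) v := by
  obtain ⟨h0, h1⟩ := hT
  have as : ∀ x y, T x y → ¬ T y x := fun x y h => (h1 x y (by rintro rfl; exact h0 _ h)).1 h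
  have tot : ∀ x y, x = y ∨ T x y ∨ T y x := by
    intro x y; by_cases h : x = y
    · exact Or.inl h
    · have := h1 x y h; tauto
  rintro ⟨x, y, h⟩
  have hv' : ∀ x y, ¬ (T v x ∧ T x y ∧ T y v) := fun x y h => hv ⟨x, y, h⟩
  unfold revTri at h
  grind

theorem revTri_cons {V : Type*} {E T : V → V → Prop} (hT : IsTournamentRel T) (u : V)
    (h : Cons1 E T) : Cons1 E (revTri T u) := by
  obtain ⟨h0, h1⟩ := hT
  have as : ∀ x y, T x y → ¬ T y x := fun x y h => (h1 x y (by rintro rfl; exact h0 _ h)).1 h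
  have tot : ∀ x y, x = y ∨ T x y ∨ T y x := by
    intro x y; by_cases h : x = y
    · exact Or.inl h
    · have := h1 x y h; tauto
  have h' : ∀ a b c : V, T a b → T b c → a ≠ c →
      ¬ ((E a c ∧ ¬ E a b) ∨ (E c a ∧ ¬ E b a)) := by
    intro a b c hab hbc hac hC
    exact as _ _ hbc (h a b c (by rintro rfl; exact h0 _ hab) (by rintro rfl; exact h0 _ hbc)
      hac hC hab)
  intro a b c hab hbc hac hC hT'
  by_contra hn
  have ht := (revTri_tour ⟨h0, h1⟩ u).2 b c hbc
  have hT2 := ht.2 hn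
  clear hn ht h h1
  rcases hT' with ⟨p1, p2⟩ | ⟨p1, p2, p3⟩ <;> rcases hT2 with ⟨q1, q2⟩ | ⟨q1, q2, q3⟩
  · exact h' a b c p1 q1 hac hC
  · grind
  · have d1 : u ≠ a := by rintro rfl; exact h0 _ p3
    have d2 : u ≠ b := by rintro rfl; exact h0 _ p2
    have d3 : u ≠ c := by rintro rfl; exact as _ _ p2 q1
    grind
  · exact as _ _ p2 q3

theorem stmt_13 {V : Type*} [Fintype V] (E : V → V → Prop) (hrefl : ∀ v, E v v)
    (h : ∃ T : V → V → Prop, IsTournamentRel T ∧ ConsistentWith E T) :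
    ∃ T : V → V → Prop, IsTournamentRel T ∧ ConsistentWith E T ∧
      ∀ x : V, ¬ Relation.TransGen T x x := by
  classical
  obtain ⟨T₀, hT₀, hc₀⟩ := h
  have main : ∀ s : Finset V, ∃ T : V → V → Prop, IsTournamentRel T ∧ Cons1 E T ∧
      ∀ x ∈ s, ¬ InTri T x := by
    intro s
    induction s using Finset.induction_on with
    | empty => exact ⟨T₀, hT₀, cons1_of hc₀, by simp⟩
    | insert a s _ ih =>
      obtain ⟨T, h1, h2, h3⟩ := ih
      refine ⟨revTri T a, revTri_tour h1 a, revTri_cons h1 a h2, fun x hx => ?_⟩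
      rcases Finset.mem_insert.1 hx with rfl | hx
      · exact revTri_not h1 _
      · exact revTri_pres h1 _ _ (h3 x hx)
  obtain ⟨T, h1, h2, h3⟩ := main Finset.univ
  refine ⟨T, h1, of_cons1 h1 h2, fun x hx => ?_⟩
  have as : ∀ x y, T x y → ¬ T y x :=
    fun x y h => (h1.2 x y (by rintro rfl; exact h1.1 _ h)).1 h
  have tr : ∀ x y, Relation.TransGen T x y → T x y := by
    intro x y hxy
    induction hxy with
    | single h => exact h
    | @tail b c _ hbc ih =>
      by_contra hn
      by_cases hxc : x = c
      · subst hxc; exact as _ _ ih hbc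
      · have := h1.2 x c hxc
        exact h3 x (Finset.mem_univ _) ⟨b, c, ih, hbc, by tauto⟩
  exact h1.1 x (tr x x hx)
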